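/- arXiv:2512.02903 — 2 statements merged into one kernel-verified Lean document; each statement's English description precedes it below -/
import Mathlib

section
/- At every point (r,v) of phase space with A(r,v) ≠ 0, the magnitude ‖A‖ of the Laplace–Runge–Lenz vector satisfies the Poisson bracket relations {E, ‖A‖}(r,v) = 0, {L_i, ‖A‖}(r,v) = 0 for each i ∈ {1,2,3}, and {A_i, ‖A‖}(r,v) = −2 E(r,v) ‖A(r,v)‖⁻¹ (A(r,v) × L(r,v))_i for each i ∈ {1,2,3}. -/
/-!
Along a differentiable vector field `X` the derivative of `‖X‖` at a point `p` with `X p ≠ 0` is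
that of the single component of `X` along the fixed unit vector `X p / ‖X p‖`, so that
`{F, ‖X‖}(p) = ‖X p‖⁻¹ {F, ⟪X, w⟫}(p)` with `w = X p` held constant. For `X = A` the
right-hand side is given by the classical relations, written without coordinates as
`{E, ⟪A, w⟫} = 0`, `{⟪L, u⟫, ⟪A, w⟫} = ⟪A, u × w⟫` and `{⟪A, u⟫, ⟪A, w⟫} = -2E ⟪L, u × w⟫`.
At `w = A` the second one vanishes because `u × A ⊥ A`, and the third one is the component
of `-2E (A × L)` along `u`.
-/

noncomputable section

/-- Physical 3-space. -/
abbrev E3 : Type := EuclideanSpace ℝ (Fin 3)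

/-- Build a vector in `E3` from its components. -/
def toE3 (f : Fin 3 → ℝ) : E3 := (EuclideanSpace.equiv (Fin 3) ℝ).symm f

/-- Cross product in `ℝ³`. -/
def cross (a b : E3) : E3 :=
  toE3 ![a 1 * b 2 - a 2 * b 1, a 2 * b 0 - a 0 * b 2, a 0 * b 1 - a 1 * b 0]

/-- Dot product in `ℝ³`. -/
def dot (a b : E3) : ℝ := ∑ i, a i * b i

/-- Gradient in the `r` variable of a function on phase space. -/
def gradR (F : E3 × E3 → ℝ) (p : E3 × E3) : E3 := gradient (fun x => F (x, p.2)) p.1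

/-- Gradient in the `v` variable of a function on phase space. -/
def gradV (F : E3 × E3 → ℝ) (p : E3 × E3) : E3 := gradient (fun y => F (p.1, y)) p.2

/-- Poisson bracket of two functions on phase space. -/
def pb (F G : E3 × E3 → ℝ) (p : E3 × E3) : ℝ :=
  dot (gradR F p) (gradV G p) - dot (gradR G p) (gradV F p)

/-- Energy `E(r,v) = (1/2)‖v‖² − κ/‖r‖`. -/
def energy (κ : ℝ) (p : E3 × E3) : ℝ := (1/2) * ‖p.2‖^2 - κ / ‖p.1‖

/-- Angular momentum `L(r,v) = r × v`. -/
def angMom (p : E3 × E3) : E3 := cross p.1 p.2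

/-- Laplace–Runge–Lenz vector `A(r,v) = v × L − κ r/‖r‖`. -/
def lrl (κ : ℝ) (p : E3 × E3) : E3 := cross p.2 (angMom p) - (κ / ‖p.1‖) • p.1

/-- LRL direction vector `Θ = A/‖A‖`. -/
def lrlDir (κ : ℝ) (p : E3 × E3) : E3 := ‖lrl κ p‖⁻¹ • lrl κ p

/-- Levi-Civita symbol `ε_{ijk}` on indices in `{0,1,2}`. -/
def eps (i j k : Fin 3) : ℝ :=
  (((j : ℕ) : ℝ) - ((i : ℕ) : ℝ)) * (((k : ℕ) : ℝ) - ((i : ℕ) : ℝ))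
    * (((k : ℕ) : ℝ) - ((j : ℕ) : ℝ)) / 2

open scoped InnerProductSpace Matrix

section Gradients

variable {H V : Type*} [NormedAddCommGroup H] [InnerProductSpace ℝ H]
  [NormedAddCommGroup V] [InnerProductSpace ℝ V]

lemma hasFDerivAt_norm_comp {X : H → V} {X' : H →L[ℝ] V} {x : H}
    (hX : HasFDerivAt X X' x) (h0 : X x ≠ 0) :
    HasFDerivAt (fun y => ‖X y‖) (‖X x‖⁻¹ • (innerSL ℝ (X x)).comp X') x := by
  have hsqrt := hX.norm_sq.sqrt (by simpa using h0)
  simp only [Real.sqrt_sq (norm_nonneg _)] at hsqrt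
  refine hsqrt.congr_fderiv ?_
  ext w
  simp only [one_div, mul_inv_rev, smul_apply, ContinuousLinearMap.comp_apply,
    coe_innerSL_apply, nsmul_eq_mul, Nat.cast_ofNat, smul_eq_mul]
  field_simp

variable [CompleteSpace H]

lemma hasGradientAt_of_forall_inner {f : H → ℝ} {f' : H →L[ℝ] ℝ} {g x : H}
    (hf : HasFDerivAt f f' x) (hg : ∀ w, f' w = ⟪g, w⟫_ℝ) : HasGradientAt f g x :=
  hasGradientAt_iff_hasFDerivAt.mpr <| hf.congr_fderiv <| ContinuousLinearMap.ext hg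

lemma hasGradientAt_inner_const (z x : H) : HasGradientAt (fun y => ⟪y, z⟫_ℝ) z x :=
  hasGradientAt_of_forall_inner ((hasFDerivAt_id x).inner ℝ (hasFDerivAt_const z x))
    fun w => by simp [real_inner_comm]

lemma hasGradientAt_const_inner (z x : H) : HasGradientAt (fun y => ⟪z, y⟫_ℝ) z x := by
  simpa only [real_inner_comm] using hasGradientAt_inner_const z x

lemma hasGradientAt_norm_sq (x : H) : HasGradientAt (fun y => ‖y‖ ^ 2) ((2 : ℝ) • x) x :=
  hasGradientAt_of_forall_inner (hasFDerivAt_id x).norm_sq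
    fun w => by simp [real_inner_smul_left]

lemma gradient_norm_comp {X : H → V} {x : H} (hX : DifferentiableAt ℝ X x) (h0 : X x ≠ 0) :
    gradient (fun y => ‖X y‖) x = ‖X x‖⁻¹ • gradient (fun y => ⟪X y, X x⟫_ℝ) x := by
  refine (hasGradientAt_of_forall_inner (hasFDerivAt_norm_comp hX.hasFDerivAt h0)
    fun w => ?_).gradient
  rw [real_inner_smul_left, inner_gradient_left,
    fderiv_inner_apply ℝ hX (differentiableAt_const _)]
  simp [real_inner_comm]

lemma hasGradientAt_const_div_norm (c : ℝ) {x : H} (hx : x ≠ 0) :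
    HasGradientAt (fun y => c / ‖y‖) (-(c / ‖x‖ ^ 3) • x) x := by
  have hinv := (hasDerivAt_inv (norm_ne_zero_iff.mpr hx)).comp_hasFDerivAt x
    (hasFDerivAt_norm_comp (hasFDerivAt_id x) hx)
  refine hasGradientAt_of_forall_inner (hinv.const_mul c) fun w => ?_
  simp only [ContinuousLinearMap.comp_id, neg_smul, smul_neg, neg_apply, smul_apply,
    coe_innerSL_apply, smul_eq_mul, inner_neg_left, real_inner_smul_left, neg_inj]
  field_simp

end Gradients

section CrossProduct

lemma ofLp_cross (a b : E3) : (cross a b).ofLp = a.ofLp ⨯₃ b.ofLp := rfl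

lemma inner_eq_dotProduct (a b : E3) : ⟪a, b⟫_ℝ = a.ofLp ⬝ᵥ b.ofLp := by
  rw [EuclideanSpace.inner_eq_star_dotProduct, star_trivial, dotProduct_comm]

lemma dot_eq_inner (a b : E3) : dot a b = ⟪a, b⟫_ℝ :=
  (inner_eq_dotProduct a b).symm

lemma inner_cross_rotate (a b c : E3) : ⟪a, cross b c⟫_ℝ = ⟪b, cross c a⟫_ℝ := by
  simp only [inner_eq_dotProduct, ofLp_cross]
  exact triple_product_permutation _ _ _

lemma inner_cross_swap (a b c : E3) : ⟪a, cross b c⟫_ℝ = -⟪a, cross c b⟫_ℝ := by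
  simp only [inner_eq_dotProduct, ofLp_cross, ← dotProduct_neg, cross_anticomm]

lemma inner_cross_self (a b : E3) : ⟪a, cross b a⟫_ℝ = 0 := by
  simp only [inner_eq_dotProduct, ofLp_cross, dot_cross_self]

lemma inner_cross_cross (a b c d : E3) :
    ⟪cross a b, cross c d⟫_ℝ = ⟪a, c⟫_ℝ * ⟪b, d⟫_ℝ - ⟪a, d⟫_ℝ * ⟪b, c⟫_ℝ := by
  simp only [inner_eq_dotProduct, ofLp_cross, cross_dot_cross]

lemma cross_cross_eq_smul_sub_smul_inner (a b c : E3) :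
    cross a (cross b c) = ⟪a, c⟫_ℝ • b - ⟪b, a⟫_ℝ • c := by
  simp only [inner_eq_dotProduct]
  exact congrArg (WithLp.toLp 2) (cross_cross_eq_smul_sub_smul' a.ofLp b.ofLp c.ofLp)

end CrossProduct

section PoissonBracket

/-- `F` has the partial gradients `a` in `r` and `b` in `v` at the phase space point `p`: the
differentiability that makes the brackets of `F` at `p` computable from `a` and `b`. -/
structure HasPartialGradientsAt (F : E3 × E3 → ℝ) (a b : E3) (p : E3 × E3) : Prop where
  left : HasGradientAt (fun x => F (x, p.2)) a p.1
  right : HasGradientAt (fun y => F (p.1, y)) b p.2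

variable {F G : E3 × E3 → ℝ} {a b c d : E3} {p : E3 × E3}

lemma pb_eq_inner_sub_inner (hF : HasPartialGradientsAt F a b p)
    (hG : HasPartialGradientsAt G c d p) : pb F G p = ⟪a, d⟫_ℝ - ⟪c, b⟫_ℝ := by
  simp only [pb, gradR, gradV, dot_eq_inner, hF.left.gradient, hF.right.gradient,
    hG.left.gradient, hG.right.gradient]

lemma pb_norm (F : E3 × E3 → ℝ) {X : E3 × E3 → E3}
    (hr : DifferentiableAt ℝ (fun x => X (x, p.2)) p.1)
    (hv : DifferentiableAt ℝ (fun y => X (p.1, y)) p.2) (h0 : X p ≠ 0) :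
    pb F (fun q => ‖X q‖) p = ‖X p‖⁻¹ * pb F (fun q => ⟪X q, X p⟫_ℝ) p := by
  have hR : gradR (fun q => ‖X q‖) p = ‖X p‖⁻¹ • gradR (fun q => ⟪X q, X p⟫_ℝ) p :=
    gradient_norm_comp hr h0
  have hV : gradV (fun q => ‖X q‖) p = ‖X p‖⁻¹ • gradV (fun q => ⟪X q, X p⟫_ℝ) p :=
    gradient_norm_comp hv h0
  simp only [pb, dot_eq_inner, hR, hV, real_inner_smul_left, real_inner_smul_right]
  ring

end PoissonBracket

section Kepler

variable (κ : ℝ) {r : E3} (v : E3)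

lemma lrl_eq_smul_sub_smul (r : E3) :
    lrl κ (r, v) = (‖v‖ ^ 2 - κ / ‖r‖) • r - ⟪r, v⟫_ℝ • v := by
  rw [lrl, angMom, cross_cross_eq_smul_sub_smul_inner, real_inner_self_eq_norm_sq]
  module

lemma inner_lrl (r w : E3) :
    ⟪lrl κ (r, v), w⟫_ℝ = (‖v‖ ^ 2 - κ / ‖r‖) * ⟪r, w⟫_ℝ - ⟪r, v⟫_ℝ * ⟪v, w⟫_ℝ := by
  rw [lrl_eq_smul_sub_smul, inner_sub_left, real_inner_smul_left, real_inner_smul_left]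

lemma hasPartialGradientsAt_energy (hr : r ≠ 0) :
    HasPartialGradientsAt (energy κ) ((κ / ‖r‖ ^ 3) • r) v (r, v) where
  left := by
    simp only [energy]
    refine hasGradientAt_of_forall_inner
      ((hasGradientAt_const_div_norm κ hr).hasFDerivAt.const_sub _) fun w => ?_
    simp [real_inner_smul_left]
  right := by
    simp only [energy]
    refine hasGradientAt_of_forall_inner
      (((hasGradientAt_norm_sq v).hasFDerivAt.const_mul (1 / 2)).sub_const _) fun w => ?_
    simp

lemma hasPartialGradientsAt_inner_angMom (r u : E3) :
    HasPartialGradientsAt (fun p => ⟪angMom p, u⟫_ℝ) (cross v u) (cross u r) (r, v) where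
  left := by
    simp only [angMom, real_inner_comm u, inner_cross_rotate u]
    exact hasGradientAt_inner_const _ r
  right := by
    simp only [angMom, real_inner_comm u, inner_cross_rotate u, inner_cross_rotate r]
    exact hasGradientAt_inner_const _ v

lemma hasPartialGradientsAt_inner_lrl (hr : r ≠ 0) (w : E3) :
    HasPartialGradientsAt (fun p => ⟪lrl κ p, w⟫_ℝ)
      ((‖v‖ ^ 2 - κ / ‖r‖) • w + (κ / ‖r‖ ^ 3 * ⟪r, w⟫_ℝ) • r - ⟪v, w⟫_ℝ • v)
      ((2 * ⟪r, w⟫_ℝ) • v - ⟪v, w⟫_ℝ • r - ⟪r, v⟫_ℝ • w) (r, v) where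
  left := by
    simp only [inner_lrl]
    have hpot := (hasGradientAt_const_div_norm κ hr).hasFDerivAt.const_sub (‖v‖ ^ 2)
    have hrw := (hasGradientAt_inner_const w r).hasFDerivAt
    have hrv := (hasGradientAt_inner_const v r).hasFDerivAt
    refine hasGradientAt_of_forall_inner
      ((hpot.mul hrw).sub (hrv.mul_const ⟪v, w⟫_ℝ)) fun z => ?_
    simp only [neg_smul, map_neg, map_smul, neg_neg, sub_apply, add_apply, smul_apply,
      InnerProductSpace.toDual_apply_apply, smul_eq_mul, inner_sub_left, inner_add_left,
      real_inner_smul_left]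
    ring
  right := by
    simp only [inner_lrl]
    have hkin := (hasGradientAt_norm_sq v).hasFDerivAt.sub_const (κ / ‖r‖)
    have hrv := (hasGradientAt_const_inner r v).hasFDerivAt
    have hvw := (hasGradientAt_inner_const w v).hasFDerivAt
    refine hasGradientAt_of_forall_inner
      ((hkin.mul_const ⟪r, w⟫_ℝ).sub (hrv.mul hvw)) fun z => ?_
    simp only [map_smul, sub_apply, smul_apply, InnerProductSpace.toDual_apply_apply,
      smul_eq_mul, add_apply, inner_sub_left, real_inner_smul_left]
    ring

lemma pb_energy_inner_lrl (hr : r ≠ 0) (w : E3) :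
    pb (energy κ) (fun p => ⟪lrl κ p, w⟫_ℝ) (r, v) = 0 := by
  have hr' : ‖r‖ ≠ 0 := norm_ne_zero_iff.mpr hr
  rw [pb_eq_inner_sub_inner (hasPartialGradientsAt_energy κ v hr)
    (hasPartialGradientsAt_inner_lrl κ v hr w)]
  simp only [inner_add_left, inner_sub_left, inner_sub_right, real_inner_smul_left,
    real_inner_smul_right, real_inner_self_eq_norm_sq, real_inner_comm v w]
  field_simp
  ring

lemma pb_inner_angMom_inner_lrl (hr : r ≠ 0) (u w : E3) :
    pb (fun p => ⟪angMom p, u⟫_ℝ) (fun p => ⟪lrl κ p, w⟫_ℝ) (r, v)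
      = ⟪lrl κ (r, v), cross u w⟫_ℝ := by
  rw [pb_eq_inner_sub_inner (hasPartialGradientsAt_inner_angMom v r u)
    (hasPartialGradientsAt_inner_lrl κ v hr w), inner_lrl]
  simp only [inner_add_left, inner_sub_left, inner_sub_right, real_inner_smul_left,
    real_inner_smul_right]
  have hleft (x : E3) : ⟪cross v u, x⟫_ℝ = ⟪v, cross u x⟫_ℝ := by
    rw [real_inner_comm, inner_cross_rotate]
  have hswap : ⟪w, cross u r⟫_ℝ = -⟪r, cross u w⟫_ℝ := by
    rw [inner_cross_rotate, inner_cross_rotate, inner_cross_swap]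
  simp only [hleft, hswap, inner_cross_self]
  ring

lemma pb_inner_lrl_inner_lrl (hr : r ≠ 0) (u w : E3) :
    pb (fun p => ⟪lrl κ p, u⟫_ℝ) (fun p => ⟪lrl κ p, w⟫_ℝ) (r, v)
      = -2 * energy κ (r, v) * ⟪angMom (r, v), cross u w⟫_ℝ := by
  have hr' : ‖r‖ ≠ 0 := norm_ne_zero_iff.mpr hr
  rw [pb_eq_inner_sub_inner (hasPartialGradientsAt_inner_lrl κ v hr u)
    (hasPartialGradientsAt_inner_lrl κ v hr w), energy, angMom, inner_cross_cross]
  simp only [inner_add_left, inner_sub_left, inner_sub_right, real_inner_smul_left,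
    real_inner_smul_right, real_inner_self_eq_norm_sq, real_inner_comm r v,
    real_inner_comm r u, real_inner_comm v u, real_inner_comm u w, real_inner_comm r w,
    real_inner_comm v w]
  field_simp
  ring

lemma pb_norm_lrl (F : E3 × E3 → ℝ) {v : E3} (hr : r ≠ 0) (hA : lrl κ (r, v) ≠ 0) :
    pb F (fun p => ‖lrl κ p‖) (r, v)
      = ‖lrl κ (r, v)‖⁻¹ * pb F (fun p => ⟪lrl κ p, lrl κ (r, v)⟫_ℝ) (r, v) := by
  refine pb_norm F ?_ ?_ hA
  · simp only [lrl_eq_smul_sub_smul]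
    have hpot := (hasGradientAt_const_div_norm κ hr).differentiableAt
    have hrv := (hasGradientAt_inner_const v r).differentiableAt
    fun_prop
  · simp only [lrl_eq_smul_sub_smul]
    have hkin := (hasGradientAt_norm_sq v).differentiableAt
    have hrv := (hasGradientAt_const_inner r v).differentiableAt
    fun_prop

end Kepler

theorem poisson_with_lrl_norm_general (κ : ℝ) (r v : E3) (hr : r ≠ 0) (hA : lrl κ (r, v) ≠ 0) :
    pb (energy κ) (fun p => ‖lrl κ p‖) (r, v) = 0 ∧
    (∀ i : Fin 3, pb (fun p => angMom p i) (fun p => ‖lrl κ p‖) (r, v) = 0) ∧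
    (∀ i : Fin 3,
      pb (fun p => lrl κ p i) (fun p => ‖lrl κ p‖) (r, v)
        = -2 * energy κ (r, v) * ‖lrl κ (r, v)‖⁻¹
            * cross (lrl κ (r, v)) (angMom (r, v)) i) := by
  have apply_eq_inner (x : E3) (i : Fin 3) : x i = ⟪x, EuclideanSpace.single i 1⟫_ℝ := by
    simp [EuclideanSpace.inner_single_right]
  simp only [pb_norm_lrl κ _ hr hA, apply_eq_inner]
  refine ⟨?_, fun i => ?_, fun i => ?_⟩
  · rw [pb_energy_inner_lrl κ v hr, mul_zero]
  · rw [pb_inner_angMom_inner_lrl κ v hr, inner_cross_self, mul_zero]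
  · rw [pb_inner_lrl_inner_lrl κ v hr, inner_cross_rotate, real_inner_comm]
    ring

/-- At points where `A ≠ 0`: `{E,‖A‖} = 0`, `{L_i,‖A‖} = 0`, and
`{A_i,‖A‖} = −2E‖A‖⁻¹ (A × L)_i`. -/
theorem poisson_with_lrl_norm (κ : ℝ) (hκ : 0 < κ)
    (r v : E3) (hr : r ≠ 0) (hA : lrl κ (r, v) ≠ 0) :
    pb (energy κ) (fun p => ‖lrl κ p‖) (r, v) = 0 ∧
    (∀ i : Fin 3, pb (fun p => angMom p i) (fun p => ‖lrl κ p‖) (r, v) = 0) ∧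
    (∀ i : Fin 3,
      pb (fun p => lrl κ p i) (fun p => ‖lrl κ p‖) (r, v)
        = -2 * energy κ (r, v) * ‖lrl κ (r, v)‖⁻¹
            * cross (lrl κ (r, v)) (angMom (r, v)) i) := by
  exact poisson_with_lrl_norm_general κ r v hr hA
end
end

section
/- Let r : I → ℝ³ be a twice differentiable curve on an interval I with r(t) ≠ 0 for all t ∈ I, satisfying the Kepler equation of motion r''(t) = −κ r(t)/‖r(t)‖³ on I. Then the Laplace–Runge–Lenz vector along the solution, t ↦ r'(t) × ( r(t) × r'(t) ) − κ r(t)/‖r(t)‖, is constant on I. -/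
/-!
By the triple product identity the vector `v × (r × v) = ‖v‖² r - ⟪r, v⟫ v` makes sense in every
real inner product space. Under a central acceleration `v' = c r` its derivative is
`c (⟪r, v⟫ r - ‖r‖² v)`, while the unit vector `r / ‖r‖` always has derivative
`(‖r‖² v - ⟪r, v⟫ r) / ‖r‖³`. The inverse-square law `c = -κ / ‖r‖³` makes the two contributions
to the derivative of the Laplace–Runge–Lenz vector cancel.
-/

noncomputable section

section InnerProductSpace

open scoped RealInnerProductSpace

variable {E : Type*} [NormedAddCommGroup E] [InnerProductSpace ℝ E]

/-- The Laplace–Runge–Lenz vector at position `x` and velocity `w` in a real inner product space.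
The double cross product `w × (x × w)` of dimension three is encoded by its triple product
expansion. -/
def lrlVector (κ : ℝ) (x w : E) : E := ‖w‖ ^ 2 • x - ⟪x, w⟫ • w - (κ / ‖x‖) • x

variable {r v : ℝ → E} {I : Set ℝ} {t : ℝ}

lemma hasDerivWithinAt_norm {w : E} (hr0 : r t ≠ 0) (hr : HasDerivWithinAt r w I t) :
    HasDerivWithinAt (fun s => ‖r s‖) (⟪r t, w⟫ / ‖r t‖) I t := by
  have hsqrt := hr.norm_sq.sqrt (pow_ne_zero 2 (norm_ne_zero_iff.mpr hr0))
  simp only [Real.sqrt_sq (norm_nonneg _)] at hsqrt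
  exact hsqrt.congr_deriv (mul_div_mul_left _ _ two_ne_zero)

lemma hasDerivWithinAt_inv_norm_smul {w : E} (hr0 : r t ≠ 0) (hr : HasDerivWithinAt r w I t) :
    HasDerivWithinAt (fun s => ‖r s‖⁻¹ • r s)
      ((‖r t‖ ^ 3)⁻¹ • (‖r t‖ ^ 2 • w - ⟪r t, w⟫ • r t)) I t := by
  have hnorm : ‖r t‖ ≠ 0 := norm_ne_zero_iff.mpr hr0
  have hinv : HasDerivWithinAt (fun s => ‖r s‖⁻¹) (-(⟪r t, w⟫ / ‖r t‖) / ‖r t‖ ^ 2) I t :=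
    (hasDerivWithinAt_norm hr0 hr).fun_inv hnorm
  refine (hinv.fun_smul hr).congr_deriv ?_
  match_scalars <;> field_simp

lemma hasDerivWithinAt_norm_sq_smul_sub_inner_smul {c : ℝ} (hr : HasDerivWithinAt r (v t) I t)
    (hv : HasDerivWithinAt v (c • r t) I t) :
    HasDerivWithinAt (fun s => ‖v s‖ ^ 2 • r s - ⟪r s, v s⟫ • v s)
      (c • (⟪r t, v t⟫ • r t - ‖r t‖ ^ 2 • v t)) I t := by
  refine ((hv.norm_sq.fun_smul hr).fun_sub ((hr.inner ℝ hv).fun_smul hv)).congr_deriv ?_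
  simp only [real_inner_smul_right, real_inner_self_eq_norm_sq, real_inner_comm (r t) (v t)]
  module

lemma hasDerivWithinAt_lrlVector {κ : ℝ} (hr0 : r t ≠ 0) (hr : HasDerivWithinAt r (v t) I t)
    (hv : HasDerivWithinAt v ((-(κ / ‖r t‖ ^ 3)) • r t) I t) :
    HasDerivWithinAt (fun s => lrlVector κ (r s) (v s)) 0 I t := by
  have hunit := (hasDerivWithinAt_inv_norm_smul hr0 hr).fun_const_smul κ
  simp only [smul_smul, ← div_eq_mul_inv] at hunit
  refine ((hasDerivWithinAt_norm_sq_smul_sub_inner_smul hr hv).fun_sub hunit).congr_deriv ?_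
  module

theorem lrl_constant_along_solutions_general (κ : ℝ) (hI : Convex ℝ I)
    (hr0 : ∀ t ∈ I, r t ≠ 0)
    (hderiv : ∀ t ∈ I, HasDerivWithinAt r (v t) I t)
    (heom : ∀ t ∈ I, HasDerivWithinAt v ((-(κ / ‖r t‖ ^ 3)) • r t) I t) :
    ∀ t₁ ∈ I, ∀ t₂ ∈ I, lrlVector κ (r t₁) (v t₁) = lrlVector κ (r t₂) (v t₂) := by
  intro t₁ ht₁ t₂ ht₂
  have hle : ‖lrlVector κ (r t₁) (v t₁) - lrlVector κ (r t₂) (v t₂)‖ ≤ 0 * ‖t₁ - t₂‖ :=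
    Convex.norm_image_sub_le_of_norm_hasDerivWithin_le
      (fun t ht => hasDerivWithinAt_lrlVector (hr0 t ht) (hderiv t ht) (heom t ht))
      (fun _ _ => norm_zero.le) hI ht₂ ht₁
  rwa [zero_mul, norm_le_zero_iff, sub_eq_zero] at hle

end InnerProductSpace

lemma cross_eq_toLp_crossProduct (a b : E3) :
    cross a b = WithLp.toLp 2 (crossProduct a.ofLp b.ofLp) := by
  rw [cross_apply]
  rfl

lemma cross_cross_eq_inner_smul_sub_inner_smul (a b c : E3) :
    cross a (cross b c) = inner ℝ a c • b - inner ℝ b a • c := by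
  rw [cross_eq_toLp_crossProduct, cross_eq_toLp_crossProduct, cross_cross_eq_smul_sub_smul']
  simp [EuclideanSpace.inner_eq_star_dotProduct, dotProduct_comm]

lemma lrlVector_eq_cross_cross_sub (κ : ℝ) (x w : E3) :
    lrlVector κ x w = cross w (cross x w) - (κ / ‖x‖) • x := by
  rw [lrlVector, cross_cross_eq_inner_smul_sub_inner_smul, real_inner_self_eq_norm_sq]

/-- Along any twice differentiable solution `r(t)` of the Kepler equation of
motion `r'' = −κ r/‖r‖³` on an interval, with `r(t) ≠ 0`, the LRL vector
`t ↦ r'(t) × (r(t) × r'(t)) − κ r(t)/‖r(t)‖` is constant. -/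
theorem lrl_constant_along_solutions (κ : ℝ) (hκ : 0 < κ)
    (I : Set ℝ) (hI : Convex ℝ I) (r v : ℝ → E3)
    (hr0 : ∀ t ∈ I, r t ≠ 0)
    (hderiv : ∀ t ∈ I, HasDerivAt r (v t) t)
    (heom : ∀ t ∈ I, HasDerivAt v ((-(κ / ‖r t‖^3)) • r t) t) :
    ∀ t₁ ∈ I, ∀ t₂ ∈ I,
      cross (v t₁) (cross (r t₁) (v t₁)) - (κ / ‖r t₁‖) • r t₁
        = cross (v t₂) (cross (r t₂) (v t₂)) - (κ / ‖r t₂‖) • r t₂ := by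
  simpa only [lrlVector_eq_cross_cross_sub] using lrl_constant_along_solutions_general κ hI hr0
    (fun t ht => (hderiv t ht).hasDerivWithinAt) (fun t ht => (heom t ht).hasDerivWithinAt)
end
end
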